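/- Let E ∈ 𝓔. Then: for every f ∈ E and λ ∈ 𝔻 the function f_λ belongs to E and the map f ↦ f_λ is a bounded operator on E; Z(E) = ∅; the inclusion map E → Hol(𝔻) is continuous (equivalently, every evaluation functional δ_λ : f ↦ f(λ), λ ∈ 𝔻, is continuous on E); 𝓗(𝔻̄) ⊂ E; and Spec(S|_E) = Spec(T|_E) = 𝔻̄, the closed unit disc. -/

import Mathlib

noncomputable section

open Metric Set Filter Topology
open scoped Classical

/-- Functions holomorphic on the open unit disc, normalized to vanish outside it.
This is our model of `Hol(𝔻)`. -/
def HolDisc : Set (ℂ → ℂ) :=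
  {f | DifferentiableOn ℂ f (Metric.ball (0:ℂ) 1) ∧ ∀ z ∉ Metric.ball (0:ℂ) 1, f z = 0}

/-- The constant function `1` of `Hol(𝔻)` (normalized to vanish outside the disc). -/
def oneD : ℂ → ℂ := fun z => if z ∈ Metric.ball (0:ℂ) 1 then 1 else 0

/-- The shift `S`, `(Sf)(z) = z f(z)`, as a linear map. -/
def shiftL : (ℂ → ℂ) →ₗ[ℂ] (ℂ → ℂ) where
  toFun f := fun z => z * f z
  map_add' f g := by funext z; simp [mul_add]
  map_smul' c f := by funext z; simp [smul_eq_mul]; ring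

/-- Division: `f_λ(z) = (f(z) - f(λ))/(z - λ)` for `z ≠ λ`, `f_λ(λ) = f'(λ)`,
normalized to vanish outside the disc.  `fdivB 0` is the backward shift `T`. -/
def fdivB (lam : ℂ) (f : ℂ → ℂ) : ℂ → ℂ := fun z =>
  if z ∈ Metric.ball (0:ℂ) 1 then
    (if z = lam then deriv f lam else (f z - f lam) / (z - lam))
  else 0

/-- The reflected model of the shift `S⁻` on `H₀(ℂ ∖ 𝔻̄)`: a function `h` on `{|ζ|>1}`
vanishing at `∞` is represented by `k(w) = h(1/w)` (holomorphic on `𝔻`, `k 0 = 0`);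
`S⁻` corresponds to `k ↦ (k(z) - k(0))/z - k'(0)·1`. -/
def negShiftF (k : ℂ → ℂ) : ℂ → ℂ := fun z => fdivB 0 k z - deriv k 0 * oneD z

/-- `n`-th Taylor coefficient at the origin. -/
def tCoeff (n : ℕ) (f : ℂ → ℂ) : ℂ := iteratedDeriv n f 0 / (Nat.factorial n)

/-!
Two algebraic relations drive the proof: backward shifting undoes shifting, `T S = 1`, and
`f - S (T f)` is the constant `f 0`. Since `f ↦ f - λ T f` is invertible for `λ ∈ 𝔻`, every `f` is
`g - λ T g` for some `g` depending continuously on `f`, and then `f λ = g 0` and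
`f z - f λ = (z - λ) (T g) z`; this gives division by `z - λ` and reduces evaluation at `λ` to
evaluation at `0`. If all elements of `E` vanished at `0`, they would vanish everywhere, so some
`f - S (T f)` is a nonzero constant; hence `1 ∈ E`, and `f 0` is read off the bounded operator
`f ↦ f - S (T f) = f 0 • 1`.

Evaluation at `λ` is an eigenvector of the transpose of `S`, and `(1 - λ S)⁻¹ 1`, which is the
function `(1 - λ z)⁻¹`, is an eigenvector of `T`, both with eigenvalue `λ`; so both spectra contain
`𝔻`. Finally `g ∈ 𝓗(𝔻̄)` is the element `g(S) 1`, where the Taylor series of `g` at `S`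
converges because its radius of convergence exceeds `1`.
-/

section Spectrum

theorem isUnit_one_sub_smul_of_spectralRadius_le_one {𝕜 A : Type*} [NontriviallyNormedField 𝕜]
    [NormedRing A] [NormedAlgebra 𝕜 A] {a : A} (ha : spectralRadius 𝕜 a ≤ 1) {c : 𝕜}
    (hc : c ∈ ball (0 : 𝕜) 1) : IsUnit (1 - c • a) := by
  apply spectrum.isUnit_one_sub_smul_of_lt_inv_radius
  have hc' : (‖c‖₊ : ENNReal) < 1 := mod_cast mem_ball_zero_iff.mp hc
  exact hc'.trans_le (ENNReal.one_le_inv.mpr ha)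

theorem spectrum_eq_closedBall_of_ball_subset {𝕜 A : Type*} [RCLike 𝕜] [NormedRing A]
    [NormedAlgebra 𝕜 A] [CompleteSpace A] {a : A} {r : NNReal} (hr : r ≠ 0)
    (ha : spectralRadius 𝕜 a ≤ r) (hball : ball (0 : 𝕜) r ⊆ spectrum 𝕜 a) :
    spectrum 𝕜 a = closedBall (0 : 𝕜) r := by
  apply Subset.antisymm
  · intro c hc
    have hc_le : (‖c‖₊ : ENNReal) ≤ r :=
      (le_iSup₂ (f := fun (k : 𝕜) (_ : k ∈ spectrum 𝕜 a) ↦ (‖k‖₊ : ENNReal)) c hc).trans ha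
    exact mem_closedBall_zero_iff.mpr (mod_cast hc_le)
  · rw [← closure_ball (0 : 𝕜) (NNReal.coe_ne_zero.mpr hr)]
    exact closure_minimal hball (spectrum.isClosed a)

theorem mem_spectrum_of_dual_apply_eq_mul {𝕜 V : Type*} [Field 𝕜] [AddCommGroup V] [Module 𝕜 V]
    {f : Module.End 𝕜 V} {φ : Module.Dual 𝕜 V} {c : 𝕜} (hφ : φ ≠ 0)
    (hφf : ∀ x, φ (f x) = c * φ x) : c ∈ spectrum 𝕜 f := by
  rw [spectrum.mem_iff, Module.End.isUnit_iff]
  intro hbij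
  refine hφ (LinearMap.ext fun y ↦ ?_)
  obtain ⟨x, rfl⟩ := hbij.surjective y
  simp [hφf]

theorem inverse_one_sub_smul_apply_sub {𝕜 V : Type*} [CommRing 𝕜] [AddCommGroup V]
    [Module 𝕜 V] [TopologicalSpace V] [IsTopologicalAddGroup V] [ContinuousConstSMul 𝕜 V]
    {A : V →L[𝕜] V} {c : 𝕜} (h : IsUnit (1 - c • A)) (x : V) :
    Ring.inverse (1 - c • A) x - c • A (Ring.inverse (1 - c • A) x) = x := by
  simpa using DFunLike.congr_fun (Ring.mul_inverse_cancel _ h) x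

end Spectrum

section PowerSeries

theorem eventually_norm_pow_le_of_spectralRadius_lt {A : Type*} [NormedRing A] [NormedAlgebra ℂ A]
    [CompleteSpace A] {a : A} {s : NNReal} (ha : spectralRadius ℂ a < s) :
    ∀ᶠ n : ℕ in atTop, ‖a ^ n‖ ≤ (s : ℝ) ^ n := by
  have hroot := (spectrum.pow_nnnorm_pow_one_div_tendsto_nhds_spectralRadius a).eventually_lt_const
    ha
  filter_upwards [hroot, eventually_gt_atTop 0] with n hn hn0
  have hpow := ENNReal.rpow_le_rpow hn.le (Nat.cast_nonneg (α := ℝ) n)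
  rw [← ENNReal.rpow_mul, one_div_mul_cancel (by positivity), ENNReal.rpow_one,
    ENNReal.rpow_natCast] at hpow
  exact_mod_cast hpow

theorem summable_coeff_smul_pow {A : Type*} [NormedRing A] [NormedAlgebra ℂ A] [CompleteSpace A]
    {p : FormalMultilinearSeries ℂ ℂ ℂ} {a : A} (ha : spectralRadius ℂ a < p.radius) :
    Summable fun n ↦ p.coeff n • a ^ n := by
  obtain ⟨s, has, hsp⟩ := ENNReal.lt_iff_exists_nnreal_btwn.mp ha
  apply (p.summable_norm_mul_pow hsp).of_norm_bounded_eventually_nat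
  filter_upwards [eventually_norm_pow_le_of_spectralRadius_lt has] with n hn
  rw [norm_smul, FormalMultilinearSeries.norm_apply_eq_norm_coef]
  gcongr

theorem apply_tsum_coeff_smul_pow {𝕜 V : Type*} [NontriviallyNormedField 𝕜]
    [NormedAddCommGroup V] [NormedSpace 𝕜 V] {p : FormalMultilinearSeries 𝕜 𝕜 𝕜} {A : V →L[𝕜] V}
    (hp : Summable fun n ↦ p.coeff n • A ^ n) {φ : StrongDual 𝕜 V} {c : 𝕜}
    (hφ : ∀ x, φ (A x) = c * φ x) (x : V) :
    φ ((∑' n, p.coeff n • A ^ n) x) = p.sum c * φ x := by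
  have hφ_pow (n : ℕ) : φ ((A ^ n) x) = c ^ n * φ x := by
    induction n with
    | zero => simp
    | succ n ih => rw [pow_succ', mul_apply_eq_comp, hφ, ih, pow_succ', mul_assoc]
  calc φ ((∑' n, p.coeff n • A ^ n) x)
      = ∑' n, φ ((p.coeff n • A ^ n) x) :=
        (φ ∘L ContinuousLinearMap.apply 𝕜 V x).map_tsum hp
    _ = ∑' n, p n (fun _ ↦ c) * φ x := by
        congr with n
        rw [smul_apply, map_smul, hφ_pow,
          FormalMultilinearSeries.apply_eq_pow_smul_coeff, smul_eq_mul, smul_eq_mul]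
        ring
    _ = p.sum c * φ x := tsum_mul_right

theorem exists_hasFPowerSeriesOnBall_of_differentiableOn_ball {g : ℂ → ℂ} {s : NNReal} {r : ℝ}
    (hsr : s < r) (hg : DifferentiableOn ℂ g (ball 0 r)) :
    ∃ p : FormalMultilinearSeries ℂ ℂ ℂ, ∃ t : NNReal, s < t ∧ HasFPowerSeriesOnBall g p 0 t := by
  obtain ⟨t, hst, htr⟩ := exists_between hsr
  lift t to NNReal using s.coe_nonneg.trans hst.le
  have hst' : s < t := mod_cast hst
  exact ⟨_, t, hst', (hg.mono (closedBall_subset_ball htr)).hasFPowerSeriesOnBall hst'.pos⟩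

end PowerSeries

section DivisionAndConstants

theorem oneD_of_mem_ball {z : ℂ} (hz : z ∈ ball (0 : ℂ) 1) : oneD z = 1 :=
  if_pos hz

theorem ne_zero_of_map_eq_oneD {V : Type*} [AddCommGroup V] [Module ℂ V] {ι : V →ₗ[ℂ] (ℂ → ℂ)}
    {u : V} (hu : ι u = oneD) : u ≠ 0 := by
  rintro rfl
  have hzero : oneD 0 = 0 := by rw [← hu, map_zero, Pi.zero_apply]
  exact one_ne_zero ((oneD_of_mem_ball (mem_ball_self one_pos)).symm.trans hzero)

theorem fdivB_of_mem_ball {lam z : ℂ} (f : ℂ → ℂ) (hz : z ∈ ball (0 : ℂ) 1) :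
    fdivB lam f z = dslope f lam z := by
  rw [fdivB, if_pos hz]
  split_ifs with h
  · rw [h, dslope_same]
  · rw [dslope_of_ne _ h, slope_def_field]

theorem sub_mul_fdivB {lam z : ℂ} (f : ℂ → ℂ) (hz : z ∈ ball (0 : ℂ) 1) :
    (z - lam) * fdivB lam f z = f z - f lam := by
  rw [fdivB_of_mem_ball f hz, ← smul_eq_mul, sub_smul_dslope]

theorem fdivB_eq_of_sub_eq_mul {lam : ℂ} {f g : ℂ → ℂ} (hlam : lam ∈ ball (0 : ℂ) 1)
    (hg : g ∈ HolDisc) (hfg : ∀ z ∈ ball (0 : ℂ) 1, f z - f lam = (z - lam) * g z) :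
    fdivB lam f = g := by
  have hslope : ∀ z ∈ ball (0 : ℂ) 1, z ≠ lam → slope f lam z = g z := fun z hz hne ↦ by
    rw [slope_def_field, hfg z hz, mul_div_cancel_left₀ _ (sub_ne_zero.mpr hne)]
  funext z
  by_cases hz : z ∈ ball (0 : ℂ) 1
  · rw [fdivB_of_mem_ball f hz]
    obtain rfl | hne := eq_or_ne z lam
    · rw [dslope_same]
      have hcont : ContinuousAt g z := hg.1.continuousOn.continuousAt (isOpen_ball.mem_nhds hz)
      apply HasDerivAt.deriv
      rw [hasDerivAt_iff_tendsto_slope]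
      refine (hcont.tendsto.mono_left nhdsWithin_le_nhds).congr' ?_
      filter_upwards [self_mem_nhdsWithin, mem_nhdsWithin_of_mem_nhds (isOpen_ball.mem_nhds hz)]
        with w hne hw using (hslope w hw hne).symm
    · rw [dslope_of_ne _ hne, hslope z hz hne]
  · rw [fdivB, if_neg hz, hg.2 z hz]

end DivisionAndConstants

/-- `ι` realizes the normed space `X` as a space of holomorphic functions on the disc on which the
shift and the backward shift act as the bounded operators `S` and `T`. A complete such `X` is a
member of the class `𝓔` when, in addition, `S` and `T` have spectral radius at most `1`. -/
structure IsShiftSpace {X : Type*} [NormedAddCommGroup X] [NormedSpace ℂ X]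
    (ι : X →ₗ[ℂ] (ℂ → ℂ)) (S T : X →L[ℂ] X) : Prop where
  injective : Function.Injective ι
  mem_holDisc (f : X) : ι f ∈ HolDisc
  map_shift (f : X) : ι (S f) = shiftL (ι f)
  map_backwardShift (f : X) : ι (T f) = fdivB 0 (ι f)

namespace IsShiftSpace

variable {X : Type*} [NormedAddCommGroup X] [NormedSpace ℂ X] {ι : X →ₗ[ℂ] (ℂ → ℂ)}
  {S T : X →L[ℂ] X} {u : X} {lam z : ℂ}

theorem eq_of_eqOn_ball (hE : IsShiftSpace ι S T) {f g : X}
    (h : EqOn (ι f) (ι g) (ball 0 1)) : f = g := by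
  refine hE.injective (funext fun z ↦ ?_)
  by_cases hz : z ∈ ball (0 : ℂ) 1
  · exact h hz
  · rw [(hE.mem_holDisc f).2 z hz, (hE.mem_holDisc g).2 z hz]

theorem apply_shift (hE : IsShiftSpace ι S T) (f : X) (z : ℂ) : ι (S f) z = z * ι f z :=
  congrFun (hE.map_shift f) z

theorem mul_apply_backwardShift (hE : IsShiftSpace ι S T) (f : X) (hz : z ∈ ball (0 : ℂ) 1) :
    z * ι (T f) z = ι f z - ι f 0 := by
  simpa only [sub_zero, hE.map_backwardShift] using sub_mul_fdivB (lam := 0) (ι f) hz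

theorem backwardShift_shift (hE : IsShiftSpace ι S T) (f : X) : T (S f) = f := by
  apply hE.injective
  rw [hE.map_backwardShift]
  refine fdivB_eq_of_sub_eq_mul (mem_ball_self one_pos) (hE.mem_holDisc f) fun z _ ↦ ?_
  simp only [hE.apply_shift, zero_mul, sub_zero]

theorem apply_sub_smul_backwardShift (hE : IsShiftSpace ι S T) (g : X)
    (hlam : lam ∈ ball (0 : ℂ) 1) : ι (g - lam • T g) lam = ι g 0 := by
  simp only [map_sub, map_smul, Pi.sub_apply, Pi.smul_apply, smul_eq_mul,
    hE.mul_apply_backwardShift g hlam, sub_sub_cancel]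

theorem fdivB_sub_smul_backwardShift (hE : IsShiftSpace ι S T) (g : X)
    (hlam : lam ∈ ball (0 : ℂ) 1) : fdivB lam (ι (g - lam • T g)) = ι (T g) := by
  refine fdivB_eq_of_sub_eq_mul hlam (hE.mem_holDisc _) fun z hz ↦ ?_
  rw [hE.apply_sub_smul_backwardShift g hlam]
  simp only [map_sub, map_smul, Pi.sub_apply, Pi.smul_apply, smul_eq_mul]
  linear_combination -hE.mul_apply_backwardShift g hz

theorem apply_zero_inverse_one_sub_smul (hE : IsShiftSpace ι S T) (hlam : lam ∈ ball (0 : ℂ) 1)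
    (hunit : IsUnit (1 - lam • T)) (f : X) :
    ι (Ring.inverse (1 - lam • T) f) 0 = ι f lam := by
  rw [← hE.apply_sub_smul_backwardShift _ hlam, inverse_one_sub_smul_apply_sub hunit]

theorem map_backwardShift_inverse_one_sub_smul (hE : IsShiftSpace ι S T)
    (hlam : lam ∈ ball (0 : ℂ) 1) (hunit : IsUnit (1 - lam • T)) (f : X) :
    ι (T (Ring.inverse (1 - lam • T) f)) = fdivB lam (ι f) := by
  rw [← hE.fdivB_sub_smul_backwardShift _ hlam, inverse_one_sub_smul_apply_sub hunit]

theorem exists_apply_zero_ne_zero [Nontrivial X] (hE : IsShiftSpace ι S T)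
    (hunit : ∀ lam ∈ ball (0 : ℂ) 1, IsUnit (1 - lam • T)) : ∃ f : X, ι f 0 ≠ 0 := by
  by_contra! hzero
  obtain ⟨f, hf⟩ := exists_ne (0 : X)
  refine hf (hE.eq_of_eqOn_ball fun z hz ↦ ?_)
  rw [← hE.apply_zero_inverse_one_sub_smul hz (hunit z hz) f, hzero, map_zero, Pi.zero_apply]

theorem map_sub_shift_backwardShift (hE : IsShiftSpace ι S T) (f : X) :
    ι (f - S (T f)) = ι f 0 • oneD := by
  funext z
  by_cases hz : z ∈ ball (0 : ℂ) 1
  · simp only [map_sub, Pi.sub_apply, Pi.smul_apply, smul_eq_mul, hE.apply_shift,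
      hE.mul_apply_backwardShift f hz, oneD, if_pos hz, sub_sub_cancel, mul_one]
  · rw [(hE.mem_holDisc _).2 z hz, Pi.smul_apply, oneD, if_neg hz, smul_zero]

theorem exists_map_eq_oneD (hE : IsShiftSpace ι S T) (hzero : ∃ f : X, ι f 0 ≠ 0) :
    ∃ u : X, ι u = oneD := by
  obtain ⟨f, hf⟩ := hzero
  exact ⟨(ι f 0)⁻¹ • (f - S (T f)), by
    rw [map_smul, hE.map_sub_shift_backwardShift, inv_smul_smul₀ hf]⟩

theorem sub_shift_backwardShift (hE : IsShiftSpace ι S T) (hu : ι u = oneD) (f : X) :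
    f - S (T f) = ι f 0 • u :=
  hE.injective (by rw [hE.map_sub_shift_backwardShift, map_smul, hu])

theorem exists_dual_apply_eq_apply_zero (hE : IsShiftSpace ι S T) (hu : ι u = oneD) :
    ∃ φ : StrongDual ℂ X, ∀ f, φ f = ι f 0 := by
  obtain ⟨ψ, hψ⟩ := SeparatingDual.exists_eq_one (R := ℂ) (ne_zero_of_map_eq_oneD hu)
  refine ⟨ψ ∘L (1 - S * T), fun f ↦ ?_⟩
  calc (ψ ∘L (1 - S * T)) f
      = ψ (f - S (T f)) := rfl
    _ = ι f 0 := by rw [hE.sub_shift_backwardShift hu, map_smul, hψ, smul_eq_mul, mul_one]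

theorem exists_dual_apply_eq_apply (hE : IsShiftSpace ι S T) (hu : ι u = oneD)
    (hlam : lam ∈ ball (0 : ℂ) 1) (hunit : IsUnit (1 - lam • T)) :
    ∃ φ : StrongDual ℂ X, ∀ f, φ f = ι f lam := by
  obtain ⟨φ, hφ⟩ := hE.exists_dual_apply_eq_apply_zero hu
  exact ⟨φ ∘L Ring.inverse (1 - lam • T), fun f ↦
    (hφ _).trans (hE.apply_zero_inverse_one_sub_smul hlam hunit f)⟩

theorem backwardShift_eq_zero (hE : IsShiftSpace ι S T) (hu : ι u = oneD) : T u = 0 := by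
  apply hE.injective
  rw [hE.map_backwardShift, map_zero]
  refine fdivB_eq_of_sub_eq_mul (mem_ball_self one_pos) (map_zero ι ▸ hE.mem_holDisc 0)
    fun z hz ↦ ?_
  rw [hu, oneD_of_mem_ball hz, oneD_of_mem_ball (mem_ball_self one_pos), sub_self, Pi.zero_apply,
    mul_zero]

theorem backwardShift_inverse_one_sub_smul (hE : IsShiftSpace ι S T) (hu : ι u = oneD)
    (hunit : IsUnit (1 - lam • S)) :
    T (Ring.inverse (1 - lam • S) u) = lam • Ring.inverse (1 - lam • S) u := by
  have h := congrArg T (inverse_one_sub_smul_apply_sub hunit u)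
  rwa [map_sub, map_smul, hE.backwardShift_shift, hE.backwardShift_eq_zero hu, sub_eq_zero] at h

section Complete

variable [CompleteSpace X]

theorem ball_subset_spectrum_shift (hE : IsShiftSpace ι S T) (hu : ι u = oneD) :
    ball 0 1 ⊆ spectrum ℂ S := by
  intro lam hlam
  rw [ContinuousLinearMap.spectrum_eq]
  refine mem_spectrum_of_dual_apply_eq_mul (φ := LinearMap.proj lam ∘ₗ ι) (fun h ↦ ?_)
    fun f ↦ hE.apply_shift f lam
  have hone : ι u lam = 0 := LinearMap.congr_fun h u
  rw [hu, oneD_of_mem_ball hlam] at hone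
  exact one_ne_zero hone

theorem ball_subset_spectrum_backwardShift (hE : IsShiftSpace ι S T) (hu : ι u = oneD)
    (hunit : ∀ lam ∈ ball (0 : ℂ) 1, IsUnit (1 - lam • S)) :
    ball 0 1 ⊆ spectrum ℂ T := by
  intro lam hlam
  have hne : Ring.inverse (1 - lam • S) u ≠ 0 := fun h ↦ by
    have hu0 := inverse_one_sub_smul_apply_sub (hunit lam hlam) u
    rw [h, map_zero, smul_zero, sub_zero] at hu0
    exact ne_zero_of_map_eq_oneD hu hu0.symm
  rw [ContinuousLinearMap.spectrum_eq]
  exact (Module.End.hasEigenvalue_of_hasEigenvector (Module.End.hasEigenvector_iff.mpr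
    ⟨Module.End.mem_eigenspace_iff.mpr (hE.backwardShift_inverse_one_sub_smul hu (hunit lam hlam)),
      hne⟩)).mem_spectrum

theorem spectrum_shift (hE : IsShiftSpace ι S T) (hSrad : spectralRadius ℂ S ≤ 1)
    (hu : ι u = oneD) : spectrum ℂ S = closedBall 0 1 := by
  simpa only [NNReal.coe_one] using spectrum_eq_closedBall_of_ball_subset one_ne_zero
    (mod_cast hSrad) (mod_cast hE.ball_subset_spectrum_shift hu)

theorem spectrum_backwardShift (hE : IsShiftSpace ι S T) (hTrad : spectralRadius ℂ T ≤ 1)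
    (hu : ι u = oneD) (hunit : ∀ lam ∈ ball (0 : ℂ) 1, IsUnit (1 - lam • S)) :
    spectrum ℂ T = closedBall 0 1 := by
  simpa only [NNReal.coe_one] using spectrum_eq_closedBall_of_ball_subset one_ne_zero
    (mod_cast hTrad) (mod_cast hE.ball_subset_spectrum_backwardShift hu hunit)

theorem exists_eqOn_mul (hE : IsShiftSpace ι S T) (hSrad : spectralRadius ℂ S ≤ 1)
    (heval : ∀ lam ∈ ball (0 : ℂ) 1, ∃ φ : StrongDual ℂ X, ∀ f, φ f = ι f lam) {g : ℂ → ℂ} {r : ℝ}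
    (hr : 1 < r) (hg : DifferentiableOn ℂ g (ball 0 r)) (f : X) :
    ∃ h : X, EqOn (ι h) (g * ι f) (ball 0 1) := by
  obtain ⟨p, t, ht, hp⟩ :=
    exists_hasFPowerSeriesOnBall_of_differentiableOn_ball (s := 1) (mod_cast hr) hg
  have ht' : (1 : ENNReal) < t := mod_cast ht
  have hsum := summable_coeff_smul_pow (hSrad.trans_lt (ht'.trans_le hp.r_le))
  refine ⟨(∑' n, p.coeff n • S ^ n) f, fun z hz ↦ ?_⟩
  obtain ⟨φ, hφ⟩ := heval z hz
  have hz' : z ∈ eball (0 : ℂ) t := by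
    rw [eball_coe]
    exact ball_subset_ball (mod_cast ht.le) hz
  have hgz : g z = p.sum z := by simpa only [zero_add] using hp.sum hz'
  rw [← hφ, apply_tsum_coeff_smul_pow hsum (c := z) (fun x ↦ by rw [hφ, hφ, hE.apply_shift]), hφ,
    Pi.mul_apply, hgz]

end Complete

end IsShiftSpace

/-- (Proposition 3.2) For `E ∈ 𝓔` (encoded as a Banach space `X` with an
injective linear inclusion `ι` into `Hol(𝔻)`, invariant under the shift `S` and backward
shift `T`, both bounded with spectral radius `≤ 1`): division by `z - λ` is a bounded
operator, `Z(E) = ∅`, evaluations are continuous, `𝓗(𝔻̄) ⊆ E`, and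
`Spec(S|E) = Spec(T|E) = 𝔻̄`. -/
theorem statement6
    {X : Type*} [NormedAddCommGroup X] [NormedSpace ℂ X] [CompleteSpace X] [Nontrivial X]
    (ι : X →ₗ[ℂ] (ℂ → ℂ)) (hinj : Function.Injective ι)
    (hhol : ∀ f : X, ι f ∈ HolDisc)
    (Sb Tb : X →L[ℂ] X)
    (hSb : ∀ f : X, ι (Sb f) = shiftL (ι f))
    (hTb : ∀ f : X, ι (Tb f) = fdivB 0 (ι f))
    (hSrad : spectralRadius ℂ Sb ≤ 1) (hTrad : spectralRadius ℂ Tb ≤ 1) :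
    -- f ↦ f_λ maps E to E and is a bounded operator
    (∀ lam ∈ Metric.ball (0:ℂ) 1, ∃ D : X →L[ℂ] X, ∀ f : X, ι (D f) = fdivB lam (ι f))
    -- Z(E) = ∅
    ∧ (∀ lam ∈ Metric.ball (0:ℂ) 1, ∃ f : X, ι f lam ≠ 0)
    -- evaluation functionals are continuous (the injection E → Hol(𝔻) is continuous)
    ∧ (∀ lam ∈ Metric.ball (0:ℂ) 1, ∃ φ : X →L[ℂ] ℂ, ∀ f : X, φ f = ι f lam)
    -- 𝓗(𝔻̄) ⊆ E
    ∧ (∀ g : ℂ → ℂ, (∃ r : ℝ, 1 < r ∧ DifferentiableOn ℂ g (Metric.ball (0:ℂ) r)) →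
        ∃ f : X, Set.EqOn (ι f) g (Metric.ball (0:ℂ) 1))
    -- Spec(S|E) = Spec(T|E) = 𝔻̄
    ∧ spectrum ℂ Sb = Metric.closedBall (0:ℂ) 1
    ∧ spectrum ℂ Tb = Metric.closedBall (0:ℂ) 1 := by
  have hE : IsShiftSpace ι Sb Tb := ⟨hinj, hhol, hSb, hTb⟩
  have hunitS : ∀ lam ∈ ball (0 : ℂ) 1, IsUnit (1 - lam • Sb) := fun _ ↦
    isUnit_one_sub_smul_of_spectralRadius_le_one hSrad
  have hunitT : ∀ lam ∈ ball (0 : ℂ) 1, IsUnit (1 - lam • Tb) := fun _ ↦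
    isUnit_one_sub_smul_of_spectralRadius_le_one hTrad
  obtain ⟨u, hu⟩ := hE.exists_map_eq_oneD (hE.exists_apply_zero_ne_zero hunitT)
  have hone : ∀ z ∈ ball (0 : ℂ) 1, ι u z = 1 := fun z hz ↦ by rw [hu, oneD_of_mem_ball hz]
  have heval : ∀ lam ∈ ball (0 : ℂ) 1, ∃ φ : X →L[ℂ] ℂ, ∀ f, φ f = ι f lam := fun lam hlam ↦
    hE.exists_dual_apply_eq_apply hu hlam (hunitT lam hlam)
  refine ⟨fun lam hlam ↦ ⟨Tb ∘L Ring.inverse (1 - lam • Tb),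
      hE.map_backwardShift_inverse_one_sub_smul hlam (hunitT lam hlam)⟩,
    fun lam hlam ↦ ⟨u, hone lam hlam ▸ one_ne_zero⟩, heval, ?_,
    hE.spectrum_shift hSrad hu, hE.spectrum_backwardShift hTrad hu hunitS⟩
  rintro g ⟨r, hr, hg⟩
  obtain ⟨f, hf⟩ := hE.exists_eqOn_mul hSrad heval hr hg u
  exact ⟨f, fun z hz ↦ by rw [hf hz, Pi.mul_apply, hone z hz, mul_one]⟩
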